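/- For every k ≥ 2 and every integer ℓ ≥ 2, there exists a k-typed Schelling game with n = kℓ agents and exactly ℓ agents of each type (some strategic, some stubborn), whose topology is a star with n+1 nodes, which admits an equilibrium assignment with social welfare strictly less than 1/k and also admits an assignment with social welfare strictly greater than ℓ − 1; consequently its price of anarchy is at least k(ℓ−1) = n − k. -/

import Mathlib

/-- A (social) Schelling game: agents `A`, of which `strategic` are the strategic
ones (the rest being stubborn), a social network `net` on the agents (the friends
of an agent are her neighbors in `net`, all other agents are her enemies), a
topology `top` on the set of locations `V`, and the preferred locations `loc`
of the (stubborn) agents. -/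
structure SchellingGame (A V : Type) where
  strategic : Finset A
  net : SimpleGraph A
  top : SimpleGraph V
  loc : A → V

namespace SchellingGame

variable {A V : Type} [Fintype A] [DecidableEq A] [Fintype V] [DecidableEq V]

/-- There are `n ≥ 2` agents, strictly more locations than agents, and the
stubborn agents have pairwise distinct preferred locations. -/
def WellFormed (g : SchellingGame A V) : Prop :=
  2 ≤ Fintype.card A ∧ Fintype.card A < Fintype.card V ∧
    Set.InjOn g.loc ↑(g.strategicᶜ)

/-- An assignment is an injective placement of the agents on the nodes of the
topology which places every stubborn agent at her preferred location. -/
def IsAssignment (g : SchellingGame A V) (v : A → V) : Prop :=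
  Function.Injective v ∧ ∀ i ∉ g.strategic, v i = g.loc i

/-- The number of friends of `i` occupying nodes adjacent to `v i`. -/
noncomputable def fcount (g : SchellingGame A V) (v : A → V) (i : A) : ℕ :=
  Nat.card {j : A // g.net.Adj i j ∧ g.top.Adj (v i) (v j)}

/-- The number of enemies of `i` occupying nodes adjacent to `v i`. -/
noncomputable def ecount (g : SchellingGame A V) (v : A → V) (i : A) : ℕ :=
  Nat.card {j : A // j ≠ i ∧ ¬ g.net.Adj i j ∧ g.top.Adj (v i) (v j)}

/-- The utility of agent `i` under assignment `v`: `0` if `i` has no adjacent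
friends, and otherwise the fraction of friends among her occupied neighbors. -/
noncomputable def util (g : SchellingGame A V) (v : A → V) (i : A) : ℚ :=
  if g.fcount v i = 0 then 0
  else (g.fcount v i : ℚ) / ((g.fcount v i : ℚ) + (g.ecount v i : ℚ))

/-- An assignment is an equilibrium if no strategic agent can strictly increase
her utility by relocating to an unoccupied node. -/
def IsEquilibrium (g : SchellingGame A V) (v : A → V) : Prop :=
  g.IsAssignment v ∧ ∀ i ∈ g.strategic, ∀ z : V, (∀ j : A, v j ≠ z) →
    g.util (Function.update v i z) i ≤ g.util v i

/-- The social welfare: the total utility of the strategic agents. -/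
noncomputable def SW (g : SchellingGame A V) (v : A → V) : ℚ :=
  ∑ i ∈ g.strategic, g.util v i

/-- `g` is a `k`-typed Schelling game with type map `typ`: two distinct agents are
friends iff they have the same type, and every type is nonempty. -/
def IsTypedGame (g : SchellingGame A V) (k : ℕ) (typ : A → Fin k) : Prop :=
  (∀ i j : A, g.net.Adj i j ↔ (i ≠ j ∧ typ i = typ j)) ∧ ∀ c : Fin k, ∃ i : A, typ i = c

end SchellingGame

/-- A star graph: one center node adjacent to all other nodes, and no other edges. -/
def IsStar {V : Type} (G : SimpleGraph V) : Prop :=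
  ∃ c : V, ∀ a b : V, G.Adj a b ↔ (a ≠ b ∧ (a = c ∨ b = c))

/-!
On a star, the agent `x` at the center decides everything: a leaf agent has utility `1` or `0`
according to whether she is a friend of `x`, and `x` herself sees all other agents, so that her
utility is her number of friends divided by `n - 1`. Let the strategic agents be all agents of
the type of `a`, together with a single agent `b` of another type, and let a single leaf be left
vacant by whoever takes the center. If `b` takes it, all strategic agents at leaves have utility
`0`, and nobody gains by moving to the vacant leaf since the center keeps an enemy or becomes
empty; the welfare is `(ℓ - 1) / (kℓ - 1) < 1 / k`. If `a` takes it, her `ℓ - 1` strategic friends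
all have utility `1`.
-/

lemma injective_update_of_forall_ne {A V : Type*} [DecidableEq A] {f : A → V} {c : V}
    (hf : Function.Injective f) (hc : ∀ i, f i ≠ c) (x : A) :
    Function.Injective (Function.update f x c) := by
  intro i j hij
  simp only [Function.update_apply] at hij
  split_ifs at hij with hi hj hj
  · exact hi.trans hj.symm
  · exact absurd hij.symm (hc j)
  · exact absurd hij (hc i)
  · exact hf hij

namespace SchellingGame

section Utility

variable {A V : Type} (g : SchellingGame A V) (v : A → V) (i : A)

lemma fcount_add_ecount [Finite A] :
    g.fcount v i + g.ecount v i = {j | g.top.Adj (v i) (v j)}.ncard := by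
  change {j | g.net.Adj i j ∧ g.top.Adj (v i) (v j)}.ncard +
    {j | j ≠ i ∧ ¬ g.net.Adj i j ∧ g.top.Adj (v i) (v j)}.ncard = _
  rw [← Set.ncard_union_eq (Set.disjoint_left.2 fun j hf he => he.2.1 hf.1)]
  congr 1 with j
  have h_ne : g.top.Adj (v i) (v j) → j ≠ i := by
    rintro h rfl
    exact h.ne rfl
  simp only [Set.mem_union, Set.mem_ofPred_eq]
  tauto

-- If no neighboring node is occupied, this reads `0 / 0 = 0`, in accordance with `util`.
lemma util_eq_fcount_div [Finite A] :
    g.util v i = g.fcount v i / {j | g.top.Adj (v i) (v j)}.ncard := by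
  rw [← fcount_add_ecount, Nat.cast_add]
  unfold util
  split_ifs with h
  · rw [h, Nat.cast_zero, zero_div]
  · rfl

lemma util_nonneg : 0 ≤ g.util v i := by
  unfold util
  split_ifs <;> positivity

variable {g v i}

lemma util_eq_zero_of_forall_not_adj (h : ∀ j, g.net.Adj i j → ¬ g.top.Adj (v i) (v j)) :
    g.util v i = 0 := by
  have : IsEmpty {j // g.net.Adj i j ∧ g.top.Adj (v i) (v j)} := ⟨fun j => h j j.2.1 j.2.2⟩
  exact if_pos Nat.card_of_isEmpty

end Utility

section Star

variable {A V : Type} {g : SchellingGame A V} {v : A → V} {c : V} {x i : A}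

lemma exists_isAssignment_center (h_inj : Function.Injective g.loc) (hc : ∀ i, g.loc i ≠ c)
    (hx : x ∈ g.strategic) : ∃ v, g.IsAssignment v ∧ v x = c := by
  classical
  refine ⟨Function.update g.loc x c, ⟨injective_update_of_forall_ne h_inj hc x, fun i hi => ?_⟩,
    Function.update_self ..⟩
  exact Function.update_of_ne (ne_of_mem_of_not_mem hx hi).symm ..

lemma util_of_center [Finite A] (hg : g.top = SimpleGraph.starGraph c)
    (hv : Function.Injective v) (hx : v x = c) :
    g.util v x = (g.net.neighborSet x).ncard / ((Nat.card A : ℚ) - 1) := by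
  have h_adj (j : A) : g.top.Adj (v x) (v j) ↔ j ≠ x := by
    rw [hg, hx, SimpleGraph.starGraph_adj_center_iff, ← hx, hv.ne_iff, ne_comm]
  have h_friends : g.fcount v x = (g.net.neighborSet x).ncard := by
    change {j | g.net.Adj x j ∧ g.top.Adj (v x) (v j)}.ncard = _
    congr 1 with j
    simpa [h_adj] using fun h : g.net.Adj x j => h.ne'
  have h_others : {j | g.top.Adj (v x) (v j)}.ncard = Nat.card A - 1 := by
    simp only [h_adj, ← Set.ncard_univ, ← Set.ncard_sdiff_singleton_of_mem (Set.mem_univ x)]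
    congr 1 with j
    simp
  have : Nonempty A := ⟨x⟩
  rw [util_eq_fcount_div, h_friends, h_others, Nat.cast_pred Nat.card_pos]

lemma setOf_adj_leaf (hg : g.top = SimpleGraph.starGraph c) (hv : Function.Injective v)
    (hx : v x = c) (hi : i ≠ x) : {j | g.top.Adj (v i) (v j)} = {x} := by
  ext j
  have h_leaf : v i ≠ v x := hv.ne hi
  simp only [hg, ← hx, SimpleGraph.starGraph_adj, Set.mem_ofPred_eq, Set.mem_singleton_iff,
    h_leaf, false_or, hv.eq_iff]
  exact ⟨And.right, fun h => ⟨h ▸ h_leaf, h⟩⟩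

lemma util_of_leaf [Finite A] [Decidable (g.net.Adj x i)] (hg : g.top = SimpleGraph.starGraph c)
    (hv : Function.Injective v) (hx : v x = c) (hi : i ≠ x) :
    g.util v i = if g.net.Adj x i then 1 else 0 := by
  have h_nbr := setOf_adj_leaf hg hv hx hi
  split_ifs with h
  · have h_sub : {x} ⊆ g.net.neighborSet i := Set.singleton_subset_iff.2 h.symm
    have h_friend : g.fcount v i = 1 := by
      change (g.net.neighborSet i ∩ {j | g.top.Adj (v i) (v j)}).ncard = 1
      rw [h_nbr, Set.inter_eq_right.2 h_sub, Set.ncard_singleton]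
    rw [util_eq_fcount_div, h_nbr, h_friend, Set.ncard_singleton, div_self (by simp)]
  · refine util_eq_zero_of_forall_not_adj fun j hij hj => h ?_
    obtain rfl : j = x := h_nbr.subset hj
    exact hij.symm

lemma SW_of_center [Finite A] (hg : g.top = SimpleGraph.starGraph c)
    (hv : Function.Injective v) (hx : v x = c) (hxs : x ∈ g.strategic) :
    g.SW v = (↑g.strategic ∩ g.net.neighborSet x).ncard +
      (g.net.neighborSet x).ncard / ((Nat.card A : ℚ) - 1) := by
  classical
  have h_leaves : ∑ i ∈ g.strategic.erase x, g.util v i =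
      (↑g.strategic ∩ g.net.neighborSet x).ncard := by
    rw [Finset.sum_congr rfl fun i hi => util_of_leaf hg hv hx (Finset.ne_of_mem_erase hi),
      Finset.sum_boole, ← Set.ncard_coe_finset]
    congr 2 with i
    simpa using fun h : g.net.Adj x i => fun _ => h.ne'
  rw [SW, ← Finset.sum_erase_add _ _ hxs, h_leaves, util_of_center hg hv hx]

lemma isEquilibrium_of_center [DecidableEq A] (hg : g.top = SimpleGraph.starGraph c)
    (hv : g.IsAssignment v) (hx : v x = c) (h_enemy : ∀ i ∈ g.strategic, ¬ g.net.Adj x i) :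
    g.IsEquilibrium v := by
  refine ⟨hv, fun i hi z hz => ?_⟩
  have hzc : z ≠ c := fun h => hz x (hx.trans h.symm)
  suffices g.util (Function.update v i z) i = 0 from this.trans_le (g.util_nonneg v i)
  refine util_eq_zero_of_forall_not_adj fun j hij hj => ?_
  rw [Function.update_self, Function.update_of_ne hij.ne', hg, SimpleGraph.starGraph_adj] at hj
  obtain rfl : j = x := hv.1 ((hj.2.resolve_left hzc).trans hx.symm)
  exact h_enemy i hi hij.symm

end Star

end SchellingGame

section SameTypeGraph

variable {A T : Type*} (typ : A → T)

/-- The social network of a typed game with type map `typ`: friends are distinct agents of the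
same type. -/
def sameTypeGraph : SimpleGraph A where
  Adj i j := i ≠ j ∧ typ i = typ j
  symm := ⟨fun _ _ h => ⟨h.1.symm, h.2.symm⟩⟩
  loopless := ⟨fun _ h => h.1 rfl⟩

lemma ncard_neighborSet_sameTypeGraph_add_one [Finite A] (x : A) :
    ((sameTypeGraph typ).neighborSet x).ncard + 1 = Nat.card {i // typ i = typ x} := by
  have h_nbr : (sameTypeGraph typ).neighborSet x = {i | typ i = typ x} \ {x} := by
    ext i
    simp [sameTypeGraph, eq_comm, and_comm]
  have hx : x ∈ {i | typ i = typ x} := rfl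
  rw [h_nbr, Set.ncard_sdiff_singleton_add_one hx]
  rfl

end SameTypeGraph

section AnarchyGame

variable {A V T : Type} [Fintype A] [DecidableEq A] [DecidableEq T] {typ : A → T} {a b : A}
  {c : V} {leaf : A → V} {v : A → V}

/-- The game with a high price of anarchy: the topology is the star with center `c`, agents are
friends according to the type map `typ`, and the strategic agents are those of the type of `a`
and, in addition, `b`. The stubborn agents sit at their nodes given by `leaf`. -/
def anarchyGame (typ : A → T) (a b : A) (c : V) (leaf : A → V) : SchellingGame A V where
  strategic := insert b ({i | typ i = typ a} : Finset A)
  net := sameTypeGraph typ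
  top := SimpleGraph.starGraph c
  loc := leaf

namespace anarchyGame

lemma mem_strategic {i : A} :
    i ∈ (anarchyGame typ a b c leaf).strategic ↔ i = b ∨ typ i = typ a := by
  simp [anarchyGame]

lemma not_adj_of_mem_strategic (hab : typ a ≠ typ b) :
    ∀ i ∈ (anarchyGame typ a b c leaf).strategic, ¬ (anarchyGame typ a b c leaf).net.Adj b i := by
  intro i hi hbi
  rcases mem_strategic.1 hi with rfl | hia
  · exact hbi.ne rfl
  · exact hab (hia.symm.trans hbi.2.symm)

lemma SW_of_enemy_center (hab : typ a ≠ typ b) (hv : Function.Injective v) (hvb : v b = c) :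
    (anarchyGame typ a b c leaf).SW v =
      ((Nat.card {i // typ i = typ b} : ℚ) - 1) / ((Nat.card A : ℚ) - 1) := by
  have h_inter : ↑(anarchyGame typ a b c leaf).strategic ∩
      (anarchyGame typ a b c leaf).net.neighborSet b = ∅ :=
    Set.disjoint_iff_inter_eq_empty.1 (Set.disjoint_left.2 (not_adj_of_mem_strategic hab))
  rw [SchellingGame.SW_of_center rfl hv hvb (mem_strategic.2 (.inl rfl)), h_inter,
    Set.ncard_empty, Nat.cast_zero, zero_add, ← ncard_neighborSet_sameTypeGraph_add_one typ b,
    Nat.cast_succ, add_sub_cancel_right]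
  rfl

lemma SW_of_friend_center (hv : Function.Injective v) (hva : v a = c) :
    (anarchyGame typ a b c leaf).SW v = ((Nat.card {i // typ i = typ a} : ℚ) - 1) +
      ((Nat.card {i // typ i = typ a} : ℚ) - 1) / ((Nat.card A : ℚ) - 1) := by
  have h_inter : ↑(anarchyGame typ a b c leaf).strategic ∩
      (anarchyGame typ a b c leaf).net.neighborSet a = (sameTypeGraph typ).neighborSet a :=
    Set.inter_eq_right.2 fun i hi => mem_strategic.2 (.inr hi.2.symm)
  rw [SchellingGame.SW_of_center rfl hv hva (mem_strategic.2 (.inr rfl)), h_inter,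
    ← ncard_neighborSet_sameTypeGraph_add_one typ a, Nat.cast_succ, add_sub_cancel_right]
  rfl

lemma exists_isEquilibrium_SW_eq (h_inj : Function.Injective leaf) (hc : ∀ i, leaf i ≠ c)
    (hab : typ a ≠ typ b) :
    ∃ v, (anarchyGame typ a b c leaf).IsEquilibrium v ∧ (anarchyGame typ a b c leaf).SW v =
      ((Nat.card {i // typ i = typ b} : ℚ) - 1) / ((Nat.card A : ℚ) - 1) := by
  obtain ⟨v, hv, hvb⟩ := SchellingGame.exists_isAssignment_center h_inj hc
    (mem_strategic.2 (.inl rfl) : b ∈ (anarchyGame typ a b c leaf).strategic)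
  exact ⟨v, SchellingGame.isEquilibrium_of_center rfl hv hvb (not_adj_of_mem_strategic hab),
    SW_of_enemy_center hab hv.1 hvb⟩

lemma exists_isAssignment_SW_eq (h_inj : Function.Injective leaf) (hc : ∀ i, leaf i ≠ c) :
    ∃ w, (anarchyGame typ a b c leaf).IsAssignment w ∧ (anarchyGame typ a b c leaf).SW w =
      ((Nat.card {i // typ i = typ a} : ℚ) - 1) +
        ((Nat.card {i // typ i = typ a} : ℚ) - 1) / ((Nat.card A : ℚ) - 1) := by
  obtain ⟨w, hw, hwa⟩ := SchellingGame.exists_isAssignment_center h_inj hc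
    (mem_strategic.2 (.inr rfl) : a ∈ (anarchyGame typ a b c leaf).strategic)
  exact ⟨w, hw, SW_of_friend_center hw.1 hwa⟩

lemma strategic_ne_univ (hab : typ a ≠ typ b) (hb : 2 ≤ Nat.card {i // typ i = typ b}) :
    (anarchyGame typ a b c leaf).strategic ≠ Finset.univ := by
  obtain ⟨⟨d, hdb⟩, hd⟩ : ∃ d : {i // typ i = typ b}, d ≠ ⟨b, rfl⟩ :=
    have := Finite.one_lt_card_iff_nontrivial.1 hb
    exists_ne _
  intro h
  rcases mem_strategic.1 (h ▸ Finset.mem_univ d) with rfl | hda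
  · exact hd rfl
  · exact hab (hda.symm.trans hdb)

end anarchyGame

end AnarchyGame

lemma exists_divNat_eq {k l : ℕ} (hl : 0 < l) (c : Fin k) :
    ∃ i : Fin (k * l), i.divNat = c :=
  ⟨finProdFinEquiv (c, ⟨0, hl⟩), congrArg Prod.fst (finProdFinEquiv.symm_apply_apply _)⟩

lemma card_divNat_fiber {k l : ℕ} (c : Fin k) :
    Nat.card {i : Fin (k * l) // i.divNat = c} = l := by
  have h_equiv : {i : Fin (k * l) // i.divNat = c} ≃ {p : Fin k × Fin l | p.1 = c} :=
    finProdFinEquiv.symm.subtypeEquiv fun _ => Iff.rfl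
  have h_fiber : {p : Fin k × Fin l | p.1 = c} = {c} ×ˢ Set.univ := by
    ext
    simp
  rw [Nat.card_congr h_equiv, Nat.card_coe_set_eq, h_fiber, Set.ncard_prod, Set.ncard_singleton,
    Set.ncard_univ, Nat.card_fin, one_mul]

section Arithmetic

variable {K : Type*} [Field K] [LinearOrder K] [IsStrictOrderedRing K] {k l m r : K}

lemma sub_one_div_mul_sub_one_pos (hk : 1 ≤ k) (hl : 1 < l) : 0 < (l - 1) / (k * l - 1) :=
  div_pos (sub_pos.2 hl) (sub_pos.2 (one_lt_mul_of_le_of_lt hk hl))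

lemma sub_one_div_mul_sub_one_lt (hk : 1 < k) (hl : 1 ≤ l) : (l - 1) / (k * l - 1) < 1 / k := by
  have h_den : 0 < k * l - 1 := sub_pos.2 (one_lt_mul_of_lt_of_le hk hl)
  rw [div_lt_div_iff₀ h_den (by linarith)]
  linarith

lemma mul_mul_le_add_of_lt_one_div (hk : 0 < k) (hm : 0 ≤ m) (hr : 0 ≤ r) (h : r < 1 / k) :
    k * m * r ≤ m + r :=
  calc k * m * r = m * (r * k) := by ring
    _ ≤ m := mul_le_of_le_one_right hm ((lt_div_iff₀ hk).1 h).le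
    _ ≤ m + r := le_add_of_nonneg_right hr

end Arithmetic

/-- for all k ≥ 2 and ℓ ≥ 2 there is a k-typed Schelling game with
n = kℓ agents, exactly ℓ agents per type (some strategic, some stubborn), and a star
topology with n+1 nodes, admitting an equilibrium of social welfare < 1/k and an
assignment of social welfare > ℓ - 1; hence its price of anarchy is at least
k(ℓ-1) = n - k. -/
theorem stmt13 (k l : ℕ) (hk : 2 ≤ k) (hl : 2 ≤ l) :
    ∃ (g : SchellingGame (Fin (k * l)) (Fin (k * l + 1))) (typ : Fin (k * l) → Fin k),
      g.WellFormed ∧ g.IsTypedGame k typ ∧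
      (∀ c : Fin k, Nat.card {i // typ i = c} = l) ∧
      g.strategic.Nonempty ∧ g.strategic ≠ Finset.univ ∧
      IsStar g.top ∧
      (∃ v w, g.IsEquilibrium v ∧ g.SW v < 1 / (k : ℚ) ∧
        g.IsAssignment w ∧ (l : ℚ) - 1 < g.SW w ∧
        ((k * (l - 1) : ℕ) : ℚ) * g.SW v ≤ g.SW w) := by
  have h_surj (c : Fin k) := exists_divNat_eq (l := l) (by lia) c
  obtain ⟨a, ha⟩ := h_surj ⟨0, by lia⟩
  obtain ⟨b, hb⟩ := h_surj ⟨1, by lia⟩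
  have hab : a.divNat ≠ b.divNat := by simp [ha, hb]
  obtain ⟨v, hv, h_SW_v⟩ :=
    anarchyGame.exists_isEquilibrium_SW_eq (Fin.succ_injective _) Fin.succ_ne_zero hab
  obtain ⟨w, hw, h_SW_w⟩ :=
    anarchyGame.exists_isAssignment_SW_eq (typ := Fin.divNat) (a := a) (b := b)
      (Fin.succ_injective _) Fin.succ_ne_zero
  rw [card_divNat_fiber, Nat.card_fin, Nat.cast_mul] at h_SW_v h_SW_w
  have hkq : (1 : ℚ) < k := mod_cast hk
  have hlq : (1 : ℚ) < l := mod_cast hl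
  have h_pos := sub_one_div_mul_sub_one_pos hkq.le hlq
  have h_lt := sub_one_div_mul_sub_one_lt hkq hlq.le
  refine ⟨anarchyGame Fin.divNat a b 0 Fin.succ, Fin.divNat,
    ⟨by simpa using hk.trans (Nat.le_mul_of_pos_right k (by lia)), by simp,
      (Fin.succ_injective _).injOn⟩,
    ⟨fun _ _ => Iff.rfl, h_surj⟩, card_divNat_fiber, ⟨b, anarchyGame.mem_strategic.2 (.inl rfl)⟩,
    anarchyGame.strategic_ne_univ hab (hl.trans_eq (card_divNat_fiber _).symm),
    ⟨0, fun _ _ => SimpleGraph.starGraph_adj⟩, v, w, hv, h_SW_v.trans_lt h_lt, hw,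
    h_SW_w ▸ lt_add_of_pos_right _ h_pos, ?_⟩
  rw [h_SW_v, h_SW_w, Nat.cast_mul, Nat.cast_pred (by lia)]
  exact mul_mul_le_add_of_lt_one_div (by linarith) (by linarith) h_pos.le h_lt
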